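/- Let u be the normalized Airy function and let 0 < δ'₁ < δ'₂ < ... be the increasing enumeration of the zeros of h ↦ u'(-h) on (0,∞). Then the following trace formulas hold: ∑_{k=1}^∞ (δ'ₖ)^{-2} = -2/u'(0), ∑_{k=1}^∞ (δ'ₖ)^{-3} = 2, and ∑_{k=1}^∞ (δ'ₖ)^{-4} = 2/u'(0)². In particular, setting pₖ := (u'(0)²/2)·(δ'ₖ)^{-4}, one has ∑_{k=1}^∞ pₖ = 1. -/

import Mathlib

open Real MeasureTheory Set Filter Topology

noncomputable section

namespace AiryTrace

/-- antiderivative of `u (x+s) * u (x+t)` -/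
def K (u v : ℝ → ℝ) (s t x : ℝ) : ℝ :=
  if s = t then (x + s) * u (x + s) ^ 2 - v (x + s) ^ 2 / 2
  else (v (x + s) * u (x + t) - u (x + s) * v (x + t)) / (2 * (s - t))

lemma shift_deriv {f : ℝ → ℝ} {f' : ℝ} {x s : ℝ} (h : HasDerivAt f f' (x + s)) :
    HasDerivAt (fun y => f (y + s)) f' x := by
  simpa using h.comp_add_const x s

lemma K_deriv {u v : ℝ → ℝ} (hu : ∀ x, HasDerivAt u (v x) x)
    (hv : ∀ x, HasDerivAt v (2 * x * u x) x) (s t x : ℝ) :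
    HasDerivAt (K u v s t) (u (x + s) * u (x + t)) x := by
  unfold K
  have us := shift_deriv (hu (x + s))
  have vs := shift_deriv (hv (x + s))
  have ut := shift_deriv (hu (x + t))
  have vt := shift_deriv (hv (x + t))
  by_cases h : s = t
  · subst h
    simp only [if_true]
    refine HasDerivAt.congr_deriv (((((hasDerivAt_id x).add_const s).mul (us.pow 2)).sub ((vs.pow 2).div_const 2))) ?_
    simp; ring
  · simp only [h, if_false]
    have h' : s - t ≠ 0 := sub_ne_zero.mpr h
    refine HasDerivAt.congr_deriv ((((vs.mul ut).sub (us.mul vt)).div_const (2 * (s - t)))) ?_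
    field_simp; ring

lemma K_lim {u v : ℝ → ℝ} (lu : Tendsto u atTop (𝓝 0)) (lv : Tendsto v atTop (𝓝 0))
    (lxu : Tendsto (fun x => x * u x) atTop (𝓝 0)) (s t : ℝ) :
    Tendsto (K u v s t) atTop (𝓝 0) := by
  have sh : ∀ s : ℝ, Tendsto (fun x : ℝ => x + s) atTop atTop := fun s =>
    tendsto_atTop_add_const_right _ s tendsto_id
  have us := lu.comp (sh s)
  have vs := lv.comp (sh s)
  have ut := lu.comp (sh t)
  have vt := lv.comp (sh t)
  have xs := lxu.comp (sh s)
  unfold K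
  by_cases h : s = t
  · simp only [h, if_true]
    subst h
    have := (xs.mul us).sub ((vs.pow 2).div_const 2)
    simp only [Function.comp_def] at this
    convert this using 2
    · ring
    · norm_num
  · simp only [h, if_false]
    have := ((vs.mul ut).sub (us.mul vt)).div_const (2 * (s - t))
    simp only [Function.comp_def] at this
    convert this using 2
    norm_num

lemma nondeg {u v : ℝ → ℝ} (hu : ∀ x, HasDerivAt u (v x) x)
    (hv : ∀ x, HasDerivAt v (2 * x * u x) x) (u0 : u 0 = 1) (c : ℝ) (hc : c ≤ 0)
    (h1 : u c = 0) : v c ≠ 0 := by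
  intro h2
  set M : ℝ := 1 - 2 * c with hM
  have hd : ∀ x, HasDerivAt (fun x => (u x ^ 2 + v x ^ 2) * exp (-M * x))
      ((2 * u x * v x * (1 + 2 * x) - M * (u x ^ 2 + v x ^ 2)) * exp (-M * x)) x := by
    intro x
    have he : HasDerivAt (fun x => exp (-M * x)) (exp (-M * x) * (-M * 1)) x :=
      ((hasDerivAt_id x).const_mul (-M)).exp
    refine HasDerivAt.congr_deriv ((((hu x).pow 2).add ((hv x).pow 2)).mul he) ?_
    simp; ring
  have hanti : AntitoneOn (fun x => (u x ^ 2 + v x ^ 2) * exp (-M * x)) (Icc c 0) := by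
    apply antitoneOn_of_deriv_nonpos (convex_Icc c 0)
    · exact fun x _ => (hd x).continuousAt.continuousWithinAt
    · exact fun x _ => (hd x).differentiableAt.differentiableWithinAt
    · intro x hx
      rw [interior_Icc] at hx
      rw [(hd x).deriv]
      apply mul_nonpos_of_nonpos_of_nonneg _ (exp_pos _).le
      nlinarith [sq_nonneg (u x - v x), sq_nonneg (u x + v x), hx.1, hx.2,
        mul_nonneg (sq_nonneg (u x - v x)) (by linarith [hx.1, hx.2] : (0:ℝ) ≤ M + (1 + 2 * x)),
        mul_nonneg (sq_nonneg (u x + v x)) (by linarith [hx.1, hx.2] : (0:ℝ) ≤ M - (1 + 2 * x))]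
  have := hanti (left_mem_Icc.mpr hc) (right_mem_Icc.mpr hc) hc
  simp [h1, h2, u0] at this
  nlinarith [sq_nonneg (v 0)]

lemma picone {u v w w1 G : ℝ → ℝ} (hu : ∀ x, HasDerivAt u (v x) x)
    (hv : ∀ x, HasDerivAt v (2 * x * u x) x) (u0 : u 0 = 1)
    (up : ∀ x, 0 ≤ x → 0 < u x)
    (lu : Tendsto u atTop (𝓝 0)) (lv : Tendsto v atTop (𝓝 0))
    {δ C : ℝ} (hvδ : v (-δ) = 0)
    (hw : ∀ x, HasDerivAt w (w1 x) x)
    (hG : ∀ x, HasDerivAt G (w1 x ^ 2 + 2 * (x - δ) * w x ^ 2) x)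
    (hwz : ∀ x, 0 < x → u (x - δ) = 0 → w x = 0)
    (hwC : ∀ x, δ ≤ x → |w x| ≤ C * u (x - δ))
    (lG : Tendsto G atTop (𝓝 0)) : G 0 ≤ 0 := by
  have hφ : ∀ x, HasDerivAt (fun y => u (y - δ)) (v (x - δ)) x := fun x => by
    simpa [sub_eq_add_neg] using shift_deriv (s := -δ) (hu (x + -δ))
  have hφ' : ∀ x, HasDerivAt (fun y => v (y - δ)) (2 * (x - δ) * u (x - δ)) x := fun x => by
    simpa [sub_eq_add_neg] using shift_deriv (s := -δ) (hv (x + -δ))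
  set P : ℝ → ℝ := fun x => w x ^ 2 * v (x - δ) / u (x - δ) with hP
  have hR : ∀ x, 0 ≤ x → ∃ r, 0 ≤ r ∧ HasDerivAt (fun y => G y - P y) r x := by
    intro x hx
    by_cases hz : u (x - δ) = 0
    · have hxd : x - δ < 0 := by
        by_contra h
        exact (up _ (not_lt.mp h)).ne' hz
      have hvne := nondeg hu hv u0 _ hxd.le hz
      have hx0 : 0 < x := by
        rcases hx.lt_or_eq with h | h
        · exact h
        · subst h; simp at hz hvne; exact absurd hvδ hvne
      have hw0 := hwz x hx0 hz
      refine ⟨0, le_rfl, ?_⟩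
      have hPd : HasDerivAt P (w1 x ^ 2) x := by
        rw [hasDerivAt_iff_tendsto_slope]
        have a1 := hasDerivAt_iff_tendsto_slope.mp (hw x)
        have a2 := hasDerivAt_iff_tendsto_slope.mp (hφ x)
        have a3 : Tendsto (fun y => v (y - δ)) (𝓝[≠] x) (𝓝 (v (x - δ))) :=
          (hφ' x).continuousAt.tendsto.mono_left nhdsWithin_le_nhds
        have a4 := ((a1.pow 2).mul a3).div a2 hvne
        have e : w1 x ^ 2 * v (x - δ) / v (x - δ) = w1 x ^ 2 := by field_simp
        rw [e] at a4
        refine a4.congr' ?_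
        filter_upwards [self_mem_nhdsWithin] with y hy
        have hyx : y - x ≠ 0 := sub_ne_zero.mpr hy
        simp only [Pi.div_apply, slope_def_field, hP, hw0, hz]
        by_cases hq : u (y - δ) = 0
        · simp [hq]
        · field_simp
          simp
          ring
      refine HasDerivAt.congr_deriv ((hG x).sub hPd) ?_
      rw [hw0]; ring
    · refine ⟨(w1 x - w x * v (x - δ) / u (x - δ)) ^ 2, sq_nonneg _, ?_⟩
      have hPd := (((hw x).pow 2).mul (hφ' x)).div (hφ x) hz
      refine HasDerivAt.congr_deriv ((hG x).sub hPd) ?_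
      simp
      field_simp
      ring
  have hmono : MonotoneOn (fun y => G y - P y) (Ici 0) := by
    apply monotoneOn_of_deriv_nonneg (convex_Ici 0)
    · intro x hx
      obtain ⟨r, _, h⟩ := hR x hx
      exact h.continuousAt.continuousWithinAt
    · intro x hx
      obtain ⟨r, _, h⟩ := hR x (interior_subset hx)
      exact h.differentiableAt.differentiableWithinAt
    · intro x hx
      obtain ⟨r, h0, h⟩ := hR x (interior_subset hx)
      rw [h.deriv]; exact h0
  have sh : Tendsto (fun x : ℝ => x - δ) atTop atTop := by
    simpa [sub_eq_add_neg] using tendsto_atTop_add_const_right atTop (-δ) tendsto_id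
  have lP : Tendsto P atTop (𝓝 0) := by
    have b : Tendsto (fun x => C ^ 2 * u (x - δ) * |v (x - δ)|) atTop (𝓝 0) := by
      have := ((lu.comp sh).const_mul (C ^ 2)).mul (lv.comp sh).abs
      simpa [Function.comp_def] using this
    apply squeeze_zero_norm' _ b
    filter_upwards [eventually_ge_atTop δ] with x hx
    have hp := up (x - δ) (by linarith)
    have hc := hwC x hx
    have h2 : w x ^ 2 ≤ (C * u (x - δ)) ^ 2 := by
      rw [← sq_abs]; exact pow_le_pow_left₀ (abs_nonneg _) hc 2
    rw [hP]
    simp only [norm_eq_abs, abs_div, abs_mul, abs_pow, sq_abs, abs_of_pos hp]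
    rw [div_le_iff₀ hp]
    calc w x ^ 2 * |v (x - δ)| ≤ (C * u (x - δ)) ^ 2 * |v (x - δ)| := by gcongr
      _ = _ := by ring
  have hlim : Tendsto (fun y => G y - P y) atTop (𝓝 0) := by simpa using lG.sub lP
  have h0 : G 0 - P 0 = G 0 := by simp [hP, hvδ]
  rw [← h0]
  apply ge_of_tendsto hlim
  filter_upwards [eventually_ge_atTop 0] with x hx
  exact hmono (mem_Ici.mpr le_rfl) (mem_Ici.mpr hx) hx

lemma gram {u v : ℝ → ℝ} (hu : ∀ x, HasDerivAt u (v x) x)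
    (hv : ∀ x, HasDerivAt v (2 * x * u x) x)
    (lu : Tendsto u atTop (𝓝 0)) (lv : Tendsto v atTop (𝓝 0))
    (lxu : Tendsto (fun x => x * u x) atTop (𝓝 0))
    {ι : Type} [Fintype ι] (d s : ι → ℝ) :
    ∑ i, ∑ j, d i * d j * K u v (s i) (s j) 0 ≤ 0 := by
  set B : ℝ → ℝ := fun x => ∑ i, ∑ j, d i * d j * K u v (s i) (s j) x with hB
  have hd : ∀ x, HasDerivAt B ((∑ i, d i * u (x + s i)) ^ 2) x := by
    intro x
    have : HasDerivAt B (∑ i, ∑ j, d i * d j * (u (x + s i) * u (x + s j))) x :=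
      HasDerivAt.fun_sum fun i _ => HasDerivAt.fun_sum fun j _ =>
        (K_deriv hu hv (s i) (s j) x).const_mul _
    convert this using 1
    rw [sq, Finset.sum_mul_sum]
    exact Finset.sum_congr rfl fun i _ => Finset.sum_congr rfl fun j _ => by ring
  have hm : Monotone B := monotone_of_deriv_nonneg (fun x => (hd x).differentiableAt)
    (fun x => by rw [(hd x).deriv]; positivity)
  have hl : Tendsto B atTop (𝓝 0) := by
    have : Tendsto B atTop (𝓝 (∑ i, ∑ j, d i * d j * 0)) :=
      tendsto_finsetSum _ fun i _ => tendsto_finsetSum _ fun j _ =>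
        (K_lim lu lv lxu (s i) (s j)).const_mul _
    simpa using this
  exact hm.ge_of_tendsto hl 0

lemma form {u v : ℝ → ℝ} (hu : ∀ x, HasDerivAt u (v x) x)
    (hv : ∀ x, HasDerivAt v (2 * x * u x) x) (u0 : u 0 = 1)
    (up : ∀ x, 0 ≤ x → 0 < u x) (ua : AntitoneOn u (Ici 0))
    (lu : Tendsto u atTop (𝓝 0)) (lv : Tendsto v atTop (𝓝 0))
    (lxu : Tendsto (fun x => x * u x) atTop (𝓝 0))
    {ι : Type} [Fintype ι] (d s : ι → ℝ) {δ : ℝ} (hvδ : v (-δ) = 0)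
    (hs : ∀ i, -δ ≤ s i)
    (hz : ∀ x, 0 < x → u (x - δ) = 0 → ∑ i, d i * u (x + s i) = 0) :
    (∑ i, d i * u (s i)) * (∑ i, d i * v (s i))
      - ∑ i, ∑ j, d i * d j * (2 * (s i + δ)) * K u v (s i) (s j) 0 ≤ 0 := by
  have hw : ∀ x, HasDerivAt (fun x => ∑ i, d i * u (x + s i)) (∑ i, d i * v (x + s i)) x :=
    fun x => HasDerivAt.fun_sum fun i _ => (shift_deriv (hu _)).const_mul _
  have hw' : ∀ x, HasDerivAt (fun x => ∑ i, d i * v (x + s i))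
      (∑ i, d i * (2 * (x + s i) * u (x + s i))) x :=
    fun x => HasDerivAt.fun_sum fun i _ => (shift_deriv (hv _)).const_mul _
  have sh : ∀ s : ℝ, Tendsto (fun x : ℝ => x + s) atTop atTop := fun s =>
    tendsto_atTop_add_const_right _ s tendsto_id
  have key := picone (w := fun x => ∑ i, d i * u (x + s i)) (w1 := fun x => ∑ i, d i * v (x + s i))
    (G := fun x => (∑ i, d i * u (x + s i)) * (∑ i, d i * v (x + s i))
      - ∑ i, ∑ j, d i * d j * (2 * (s i + δ)) * K u v (s i) (s j) x)
    (C := ∑ i, |d i|) hu hv u0 up lu lv hvδ hw ?_ hz ?_ ?_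
  · simpa using key
  · intro x
    have h1 : HasDerivAt (fun x => ∑ i, ∑ j, d i * d j * (2 * (s i + δ)) * K u v (s i) (s j) x)
      (∑ i, ∑ j, d i * d j * (2 * (s i + δ)) * (u (x + s i) * u (x + s j))) x :=
      HasDerivAt.fun_sum fun i _ => HasDerivAt.fun_sum fun j _ =>
        (K_deriv hu hv (s i) (s j) x).const_mul _
    refine HasDerivAt.congr_deriv (((hw x).mul (hw' x)).sub h1) ?_
    have e : ∑ i, ∑ j, d i * d j * (2 * (s i + δ)) * (u (x + s i) * u (x + s j))
      = (∑ i, d i * (2 * (s i + δ)) * u (x + s i)) * (∑ j, d j * u (x + s j)) := by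
      rw [Finset.sum_mul_sum]
      exact Finset.sum_congr rfl fun i _ => Finset.sum_congr rfl fun j _ => by ring
    have e2 : ∑ i, d i * (2 * (x + s i) * u (x + s i)) =
        2 * (x - δ) * (∑ i, d i * u (x + s i)) + ∑ i, d i * (2 * (s i + δ)) * u (x + s i) := by
      rw [Finset.mul_sum, ← Finset.sum_add_distrib]
      exact Finset.sum_congr rfl fun i _ => by ring
    rw [e, e2]
    ring
  · intro x hx
    rw [Finset.sum_mul]
    refine (Finset.abs_sum_le_sum_abs _ _).trans (Finset.sum_le_sum fun i _ => ?_)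
    have h0 : 0 ≤ x + s i := by linarith [hs i]
    rw [abs_mul, abs_of_pos (up _ h0)]
    apply mul_le_mul_of_nonneg_left _ (abs_nonneg _)
    exact ua (mem_Ici.mpr (by linarith)) (mem_Ici.mpr h0) (by linarith [hs i])
  · have t1 : Tendsto (fun x => ∑ i, d i * u (x + s i)) atTop (𝓝 (∑ i, d i * 0)) :=
      tendsto_finsetSum _ fun i _ => (lu.comp (sh (s i))).const_mul _
    have t2 : Tendsto (fun x => ∑ i, d i * v (x + s i)) atTop (𝓝 (∑ i, d i * 0)) :=
      tendsto_finsetSum _ fun i _ => (lv.comp (sh (s i))).const_mul _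
    have t3 : Tendsto (fun x => ∑ i, ∑ j, d i * d j * (2 * (s i + δ)) * K u v (s i) (s j) x) atTop
        (𝓝 (∑ i, ∑ j, d i * d j * (2 * (s i + δ)) * 0)) :=
      tendsto_finsetSum _ fun i _ => tendsto_finsetSum _ fun j _ =>
        (K_lim lu lv lxu (s i) (s j)).const_mul _
    simpa using (t1.mul t2).sub t3

lemma nodes {u v : ℝ → ℝ} (hu : ∀ x, HasDerivAt u (v x) x)
    (hv : ∀ x, HasDerivAt v (2 * x * u x) x) (u0 : u 0 = 1) (v0 : v 0 < 0)
    (up : ∀ x, 0 ≤ x → 0 < u x)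
    (δ : ℕ → ℝ) (hδ_mono : StrictMono δ)
    (hδ_all : ∀ x : ℝ, 0 < x → v (-x) = 0 → ∃ k, δ k = x) (N : ℕ) :
    ∃ κ : ℝ → ℕ, MapsTo κ {x | 0 < x ∧ u (x - δ N) = 0} (Finset.range N : Finset ℕ) ∧
      InjOn κ {x | 0 < x ∧ u (x - δ N) = 0} := by
  classical
  set κ : ℝ → ℕ := fun x => Nat.findGreatest (fun k => δ k < δ N - x) N with hκ
  have hneg : ∀ x, 0 < x → u (x - δ N) = 0 → x - δ N < 0 := by
    intro x _ h
    by_contra h'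
    exact (up _ (not_lt.mp h')).ne' h
  have hex : ∀ y, y < 0 → u y = 0 → ∃ k, δ k < -y := by
    intro y hy hy0
    by_contra hcon
    push Not at hcon
    have hnz : ∀ c ∈ Ioc y 0, v c < 0 := by
      intro c hc
      by_contra h'
      have h' := not_lt.mp h'
      have hcont : ContinuousOn v (Icc c 0) := fun x _ => (hv x).continuousAt.continuousWithinAt
      obtain ⟨e, he, he0⟩ := intermediate_value_Icc' hc.2 hcont ⟨v0.le, h'⟩
      have he1 : e < 0 := lt_of_le_of_ne he.2 (by rintro rfl; linarith)
      obtain ⟨k, hk⟩ := hδ_all (-e) (by linarith) (by simpa using he0)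
      have := hcon k
      linarith [hc.1, he.1]
    obtain ⟨c, hc, hc'⟩ := exists_hasDerivAt_eq_slope u v hy
      (fun x _ => (hu x).continuousAt.continuousWithinAt) (fun x _ => hu x)
    have := hnz c ⟨hc.1, hc.2.le⟩
    rw [hc', u0, hy0] at this
    have h3 : 0 < (1 - 0) / (0 - y) := div_pos (by norm_num) (by linarith)
    linarith
  have hspec : ∀ x, 0 < x → u (x - δ N) = 0 → δ (κ x) < δ N - x := by
    intro x hx h
    obtain ⟨k, hk⟩ := hex _ (hneg x hx h) h
    have hk0 : δ 0 < δ N - x := by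
      have := hδ_mono.monotone (Nat.zero_le k); linarith
    exact Nat.findGreatest_spec (P := fun k => δ k < δ N - x) (Nat.zero_le N) hk0
  have hlt : ∀ x y, 0 < x → x < y → u (x - δ N) = 0 → u (y - δ N) = 0 → κ y < κ x := by
    intro x y hx hxy h1 h2
    obtain ⟨c, hc, hc'⟩ := exists_hasDerivAt_eq_zero (f := u) (f' := v)
      (sub_lt_sub_right hxy (δ N))
      (fun x _ => (hu x).continuousAt.continuousWithinAt) (h1.trans h2.symm) (fun x _ => hu x)
    have hy := hneg y (hx.trans hxy) h2
    obtain ⟨j, hj⟩ := hδ_all (-c) (by linarith [hc.2]) (by simpa using hc')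
    have hjlt : δ j < δ N - x := by linarith [hc.1]
    have hjN : j ≤ N := (hδ_mono.lt_iff_lt.mp (by linarith : δ j < δ N)).le
    have a := Nat.le_findGreatest (P := fun k => δ k < δ N - x) hjN hjlt
    have b := hspec y (hx.trans hxy) h2
    have : κ y < j := hδ_mono.lt_iff_lt.mp (by linarith [hc.2])
    exact this.trans_le a
  refine ⟨κ, ?_, ?_⟩
  · rintro x ⟨hx, h⟩
    simp only [Finset.coe_range, mem_Iio]
    exact hδ_mono.lt_iff_lt.mp (by linarith [hspec x hx h])
  · rintro x ⟨hx, h⟩ y ⟨hy, h'⟩ hxy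
    by_contra hne
    rcases lt_or_gt_of_ne hne with hl | hl
    · have := hlt x y hx hl h h'; omega
    · have := hlt y x hy hl h' h; omega
lemma dbl {u v : ℝ → ℝ} (δ : ℕ → ℝ) (hδ_mono : StrictMono δ)
    (hδ_zero : ∀ k, v (-(δ k)) = 0) (N : ℕ) (z : ℝ) (hz : ∀ k, z + δ k ≠ 0)
    (c : ℝ) (e : Fin N → ℝ) (β : Option (Fin N) → ℝ) :
    (∑ i : Option (Fin N), ∑ j : Option (Fin N),
      (i.elim c e) * (j.elim c e) * β i *
        K u v (i.elim z fun k => -δ k) (j.elim z fun k => -δ k) 0)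
    = c ^ 2 * β none * (z * u z ^ 2 - v z ^ 2 / 2)
      + ∑ k : Fin N, (c * (e k * u (-δ k)) * (β none + β (some k)) * v z / (2 * (z + δ k))
        - (e k * u (-δ k)) ^ 2 * β (some k) * δ k) := by
  have hin : ∀ k : Fin N, ∑ j : Fin N, e k * e j * β (some k) * K u v (-δ k) (-δ j) 0
      = - ((e k * u (-δ k)) ^ 2 * β (some k) * δ k) := by
    intro k
    rw [Finset.sum_eq_single k]
    · simp [K, hδ_zero]; ring
    · intro j _ hj
      have : ¬ (δ k = δ j) := fun h => hj (Fin.ext (hδ_mono.injective h.symm))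
      simp [K, this, hδ_zero]
    · simp
  have h1 : ∀ k : Fin N, K u v z (-δ k) 0 = v z * u (-δ k) / (2 * (z + δ k)) := by
    intro k
    have : ¬ (z = -δ k) := fun h => hz k (by rw [h]; ring)
    simp [K, this, hδ_zero]
  have h2 : ∀ k : Fin N, K u v (-δ k) z 0 = v z * u (-δ k) / (2 * (z + δ k)) := by
    intro k
    have h0 := hz k
    have : ¬ (-δ k = z) := fun h => hz k (by rw [← h]; ring)
    simp only [K, this, hδ_zero, if_false, zero_add]
    rw [div_eq_div_iff (mul_ne_zero two_ne_zero (sub_ne_zero.mpr this))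
      (mul_ne_zero two_ne_zero h0)]
    ring
  simp only [Fintype.sum_option, Option.elim]
  rw [Finset.sum_add_distrib]
  simp only [hin, h1, h2]
  have h3 : K u v z z 0 = z * u z ^ 2 - v z ^ 2 / 2 := by simp [K]
  rw [h3, add_assoc, ← Finset.sum_add_distrib, ← Finset.sum_add_distrib]
  congr 1
  · ring
  · exact Finset.sum_congr rfl fun k _ => by ring

lemma bessel {u v : ℝ → ℝ} (hu : ∀ x, HasDerivAt u (v x) x)
    (hv : ∀ x, HasDerivAt v (2 * x * u x) x) (u0 : u 0 = 1)
    (lu : Tendsto u atTop (𝓝 0)) (lv : Tendsto v atTop (𝓝 0))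
    (lxu : Tendsto (fun x => x * u x) atTop (𝓝 0))
    (δ : ℕ → ℝ) (hδ_pos : ∀ k, 0 < δ k) (hδ_mono : StrictMono δ)
    (hδ_zero : ∀ k, v (-(δ k)) = 0) (N : ℕ) (z : ℝ) (hz : ∀ k, z + δ k ≠ 0) :
    (z * u z ^ 2 - v z ^ 2 / 2) +
      ∑ k : Fin N, v z ^ 2 / 4 * (1 / (δ k * (z + δ k) ^ 2)) ≤ 0 := by
  have hne : ∀ k, u (-δ k) ≠ 0 := fun k h =>
    nondeg hu hv u0 _ (by linarith [hδ_pos k]) h (hδ_zero k)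
  set e : Fin N → ℝ := fun k => v z / (2 * δ k * (z + δ k)) / u (-δ k) with he
  have g := gram hu hv lu lv lxu (fun i : Option (Fin N) => i.elim 1 e)
    (fun i : Option (Fin N) => i.elim z fun k => -δ k)
  have d := dbl (u := u) δ hδ_mono hδ_zero N z hz 1 e (fun _ => 1)
  simp only [mul_one] at d
  rw [d] at g
  refine le_of_eq_of_le ?_ g
  congr 1
  · ring
  · refine Finset.sum_congr rfl fun k _ => ?_
    have := hne k
    have := hz k
    have := (hδ_pos k).ne'
    simp only [he]
    field_simp
    ring

lemma star {u v : ℝ → ℝ} (hu : ∀ x, HasDerivAt u (v x) x)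
    (hv : ∀ x, HasDerivAt v (2 * x * u x) x) (u0 : u 0 = 1) (v0 : v 0 < 0)
    (up : ∀ x, 0 ≤ x → 0 < u x) (ua : AntitoneOn u (Ici 0))
    (lu : Tendsto u atTop (𝓝 0)) (lv : Tendsto v atTop (𝓝 0))
    (lxu : Tendsto (fun x => x * u x) atTop (𝓝 0))
    (δ : ℕ → ℝ) (hδ_pos : ∀ k, 0 < δ k) (hδ_mono : StrictMono δ)
    (hδ_zero : ∀ k, v (-(δ k)) = 0)
    (hδ_all : ∀ x : ℝ, 0 < x → v (-x) = 0 → ∃ k, δ k = x)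
    (N : ℕ) (z : ℝ) (hz : ∀ k, 0 < z + δ k) :
    u z * v z - 2 * (z + δ N) * (z * u z ^ 2 - v z ^ 2 / 2) ≤
      ∑ k : Fin N, (δ N - δ k) * v z ^ 2 / 2 * (1 / (δ k * (z + δ k) ^ 2)) := by
  have hne : ∀ k, u (-δ k) ≠ 0 := fun k h =>
    nondeg hu hv u0 _ (by linarith [hδ_pos k]) h (hδ_zero k)
  obtain ⟨κ, hκ1, hκ2⟩ := nodes hu hv u0 v0 up δ hδ_mono hδ_all N
  set Z : Set ℝ := {x | 0 < x ∧ u (x - δ N) = 0} with hZ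
  have hfin : Z.Finite := Set.Finite.of_injOn hκ1 hκ2 (Finset.finite_toSet _)
  have : Fintype Z := hfin.fintype
  have hcard : Fintype.card Z ≤ N := by
    rw [← Nat.card_eq_fintype_card, Nat.card_coe_set_eq]
    have := Set.ncard_le_ncard_of_injOn κ hκ1 hκ2 (Finset.finite_toSet _)
    simpa using this
  let s : Option (Fin N) → ℝ := fun i => i.elim z fun k => -δ k
  let L : (Option (Fin N) → ℝ) →ₗ[ℝ] (Z → ℝ) :=
    { toFun := fun d x => ∑ i, d i * u (x.1 + s i)
      map_add' := fun a b => by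
        ext x; simp only [Pi.add_apply, add_mul, Finset.sum_add_distrib]
      map_smul' := fun a b => by
        ext x; simp only [Pi.smul_apply, smul_eq_mul, Finset.mul_sum, mul_assoc, RingHom.id_apply] }
  have hker : LinearMap.ker L ≠ ⊥ := LinearMap.ker_ne_bot_of_finrank_lt (by
    rw [Module.finrank_fintype_fun_eq_card, Module.finrank_fintype_fun_eq_card,
      Fintype.card_option, Fintype.card_fin]
    omega)
  obtain ⟨d, hdk, hd0⟩ := Submodule.exists_mem_ne_zero_of_ne_bot hker
  have hL : ∀ x, 0 < x → u (x - δ N) = 0 → ∑ i, d i * u (x + s i) = 0 := by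
    intro x hx hx'
    exact congrFun (LinearMap.mem_ker.mp hdk) ⟨x, hx, hx'⟩
  have hde : d = fun i => i.elim (d none) (fun k => d (some k)) := by
    ext i; cases i <;> rfl
  set c := d none with hc
  set e : Fin N → ℝ := fun k => d (some k) with he
  rw [hde] at hL
  have f := form hu hv u0 up ua lu lv lxu _ s (hδ_zero N) ?_ hL
  swap
  · intro i
    cases i with
    | none => simp only [s, Option.elim]; linarith [hz N]
    | some k =>
      have := hδ_mono k.2
      simp only [s, Option.elim]; linarith
  have hdb := dbl (u := u) δ hδ_mono hδ_zero N z (fun k => (hz k).ne') c e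
    (fun i => 2 * (s i + δ N))
  rw [hdb] at f
  simp only [Fintype.sum_option, Option.elim, s, hδ_zero, mul_zero, Finset.sum_const_zero,
    add_zero] at f
  have hlt : ∀ k : Fin N, 0 < δ N - δ k := fun k => by have := hδ_mono k.2; linarith
  have hf : c ^ 2 * (u z * v z - 2 * (z + δ N) * (z * u z ^ 2 - v z ^ 2 / 2)) +
      ∑ k : Fin N, 2 * (δ N - δ k) * (δ k * (e k * u (-δ k)) ^ 2
        - (e k * u (-δ k)) * c * v z / (z + δ k)) ≤ 0 := by
    refine le_of_eq_of_le ?_ f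
    have : ∑ k : Fin N, 2 * (δ N - δ k) * (δ k * (e k * u (-δ k)) ^ 2
        - (e k * u (-δ k)) * c * v z / (z + δ k))
      = (∑ k : Fin N, e k * u (-δ k)) * (c * v z) -
        ∑ k : Fin N, (c * (e k * u (-δ k)) * (2 * (z + δ N) + 2 * (-δ k + δ N)) * v z / (2 * (z + δ k))
        - (e k * u (-δ k)) ^ 2 * (2 * (-δ k + δ N)) * δ k) := by
      rw [Finset.sum_mul, ← Finset.sum_sub_distrib]
      refine Finset.sum_congr rfl fun k _ => ?_
      have := (hz k).ne'
      field_simp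
      ring
    rw [this]
    ring
  by_cases hc0 : c = 0
  · exfalso
    simp only [hc0, mul_zero, zero_mul, zero_div, sub_zero, ne_eq, OfNat.ofNat_ne_zero,
      not_false_eq_true, zero_pow, zero_add] at hf
    have hnn : ∀ k ∈ (Finset.univ : Finset (Fin N)),
        0 ≤ 2 * (δ N - δ k) * (δ k * (e k * u (-δ k)) ^ 2) := fun k _ => by
      have := hlt k; have := hδ_pos k; positivity
    have hs := (Finset.sum_eq_zero_iff_of_nonneg hnn).mp (le_antisymm hf (Finset.sum_nonneg hnn))
    apply hd0
    ext i
    cases i with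
    | none => exact hc0
    | some k =>
      have h1 := hs k (Finset.mem_univ k)
      have a1 := hlt k
      have a2 := hδ_pos k
      have a3 : (e k * u (-δ k)) ^ 2 = 0 := by
        rcases mul_eq_zero.mp h1 with h | h
        · linarith
        · rcases mul_eq_zero.mp h with h | h
          · linarith
          · exact h
      have a4 : e k * u (-δ k) = 0 := by simpa using a3
      exact (mul_eq_zero.mp a4).resolve_right (hne k)
  · have hc2 : 0 < c ^ 2 := by positivity
    have hlow : -(c ^ 2 * ∑ k : Fin N, (δ N - δ k) * v z ^ 2 / 2 * (1 / (δ k * (z + δ k) ^ 2))) ≤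
        ∑ k : Fin N, 2 * (δ N - δ k) * (δ k * (e k * u (-δ k)) ^ 2
        - (e k * u (-δ k)) * c * v z / (z + δ k)) := by
      rw [Finset.mul_sum, ← Finset.sum_neg_distrib]
      refine Finset.sum_le_sum fun k _ => ?_
      have h1 := hlt k
      have h2 := hδ_pos k
      have h3 := hz k
      have : 2 * (δ N - δ k) * (δ k * (e k * u (-δ k)) ^ 2
        - (e k * u (-δ k)) * c * v z / (z + δ k)) -
        (-(c ^ 2 * ((δ N - δ k) * v z ^ 2 / 2 * (1 / (δ k * (z + δ k) ^ 2))))) =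
        2 * (δ N - δ k) * δ k * (e k * u (-δ k) - c * v z / (2 * δ k * (z + δ k))) ^ 2 := by
        field_simp
        ring
      have h4 : 0 ≤ 2 * (δ N - δ k) * δ k * (e k * u (-δ k) - c * v z / (2 * δ k * (z + δ k))) ^ 2 := by
        positivity
      linarith
    by_contra hcon
    have hcon := not_le.mp hcon
    have := mul_lt_mul_of_pos_left hcon hc2
    linarith

lemma asym {u v : ℝ → ℝ} (hu : ∀ x, HasDerivAt u (v x) x)
    (hv : ∀ x, HasDerivAt v (2 * x * u x) x)
    (up : ∀ x, 0 ≤ x → 0 < u x) (ua : AntitoneOn u (Ici 0))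
    (lu : Tendsto u atTop (𝓝 0)) :
    Tendsto v atTop (𝓝 0) ∧ Tendsto (fun x => x * u x) atTop (𝓝 0) := by
  have hmono : MonotoneOn v (Ici 0) := by
    apply monotoneOn_of_deriv_nonneg (convex_Ici 0)
    · exact fun x _ => (hv x).continuousAt.continuousWithinAt
    · exact fun x _ => (hv x).differentiableAt.differentiableWithinAt
    · intro x hx
      rw [interior_Ici] at hx
      rw [(hv x).deriv]
      have := up x hx.le
      have : 0 < x := hx
      positivity
  have sh : Tendsto (fun x : ℝ => x - 1) atTop atTop := by
    simpa [sub_eq_add_neg] using tendsto_atTop_add_const_right atTop (-1 : ℝ) tendsto_id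
  have hvneg : ∀ x, 1 ≤ x → v x ≤ 0 := by
    intro x hx
    obtain ⟨c, hc, hc'⟩ := exists_hasDerivAt_eq_slope u v (show x < x + 1 by linarith)
      (fun x _ => (hu x).continuousAt.continuousWithinAt) (fun x _ => hu x)
    have h1 := hmono (mem_Ici.mpr (by linarith)) (mem_Ici.mpr (by linarith [hc.1])) hc.1.le
    have h2 := ua (mem_Ici.mpr (by linarith : (0:ℝ) ≤ x)) (mem_Ici.mpr (by linarith)) (show x ≤ x + 1 by linarith)
    have h3 : x + 1 - x = 1 := by ring
    rw [h3, div_one] at hc'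
    linarith
  have hvlow : ∀ x, 1 ≤ x → |v x| ≤ u (x - 1) := by
    intro x hx
    obtain ⟨c, hc, hc'⟩ := exists_hasDerivAt_eq_slope u v (show x - 1 < x by linarith)
      (fun x _ => (hu x).continuousAt.continuousWithinAt) (fun x _ => hu x)
    have h1 := hmono (mem_Ici.mpr (by linarith [hc.1])) (mem_Ici.mpr (by linarith)) hc.2.le
    have h3 : x - (x - 1) = 1 := by ring
    rw [h3, div_one] at hc'
    rw [abs_of_nonpos (hvneg x hx)]
    linarith [up x (by linarith)]
  have lv : Tendsto v atTop (𝓝 0) := by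
    apply squeeze_zero_norm' _ (lu.comp sh)
    filter_upwards [eventually_ge_atTop 1] with x hx
    exact hvlow x hx
  refine ⟨lv, ?_⟩
  have hb : ∀ x, 2 ≤ x → 2 * (x - 1) * u x ≤ - v (x - 1) := by
    intro x hx
    obtain ⟨c, hc, hc'⟩ := exists_hasDerivAt_eq_slope v (fun x => 2 * x * u x)
      (show x - 1 < x by linarith)
      (fun x _ => (hv x).continuousAt.continuousWithinAt) (fun x _ => hv x)
    have h3 : x - (x - 1) = 1 := by ring
    simp only [h3, div_one] at hc'
    have h1 := ua (mem_Ici.mpr (by linarith [hc.1] : (0:ℝ) ≤ c)) (mem_Ici.mpr (by linarith)) hc.2.le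
    have h2 := hvneg x (by linarith)
    have h4 := up x (by linarith)
    have h5 : 2 * (x - 1) * u x ≤ 2 * c * u c :=
      mul_le_mul (by linarith [hc.1]) h1 h4.le (by linarith [hc.1])
    linarith
  have l1 : Tendsto (fun x => - v (x - 1)) atTop (𝓝 0) := by
    simpa [Function.comp_def] using (lv.comp sh).neg
  refine tendsto_of_tendsto_of_tendsto_of_le_of_le' tendsto_const_nhds l1 ?_ ?_
  · filter_upwards [eventually_ge_atTop 0] with x hx
    exact mul_nonneg hx (up x hx).le
  · filter_upwards [eventually_ge_atTop 2] with x hx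
    have := hb x hx
    have h4 := up x (by linarith)
    nlinarith

/-- the main trace identities -/
lemma main {u v : ℝ → ℝ} (hu : ∀ x, HasDerivAt u (v x) x)
    (hv : ∀ x, HasDerivAt v (2 * x * u x) x) (u0 : u 0 = 1) (v0 : v 0 < 0)
    (up : ∀ x, 0 ≤ x → 0 < u x) (ua : AntitoneOn u (Ici 0))
    (lu : Tendsto u atTop (𝓝 0))
    (δ : ℕ → ℝ) (hδ_pos : ∀ k, 0 < δ k) (hδ_mono : StrictMono δ)
    (hδ_zero : ∀ k, v (-(δ k)) = 0)
    (hδ_all : ∀ x : ℝ, 0 < x → v (-x) = 0 → ∃ k, δ k = x) :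
    HasSum (fun k => ((δ k) ^ 2)⁻¹) (-2 / v 0) ∧ HasSum (fun k => ((δ k) ^ 3)⁻¹) 2 ∧
    HasSum (fun k => ((δ k) ^ 4)⁻¹) (2 / v 0 ^ 2) := by
  obtain ⟨lv, lxu⟩ := asym hu hv up ua lu
  have hE : ∀ x, 0 ≤ x → 2 * x * u x ^ 2 ≤ v x ^ 2 := by
    intro x hx
    have := gram hu hv lu lv lxu (fun _ : Unit => (1:ℝ)) (fun _ => x)
    simp [K] at this
    linarith
  have hvne : ∀ z, -δ 0 < z → v z ≠ 0 := by
    intro z hz h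
    rcases lt_trichotomy z 0 with h1 | h1 | h1
    · obtain ⟨k, hk⟩ := hδ_all (-z) (by linarith) (by simpa using h)
      have := hδ_mono.monotone (Nat.zero_le k)
      linarith
    · rw [h1] at h; linarith
    · have h2 := hE z h1.le
      have h3 := up z h1.le
      have : 0 < 2 * z * u z ^ 2 := by positivity
      rw [h] at h2
      norm_num at h2
      linarith
  have hzp : ∀ z, -δ 0 < z → ∀ k, 0 < z + δ k := fun z hz k => by
    have := hδ_mono.monotone (Nat.zero_le k); linarith
  set m : ℝ → ℝ := fun z => -2 * u z / v z with hm
  set τ : ℝ → ℝ := fun z => 2 - z * (4 * u z ^ 2 / v z ^ 2) with hτ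
  have hT : ∀ z, -δ 0 < z → ∀ N, ∑ k ∈ Finset.range N, 1 / (δ k * (z + δ k) ^ 2) ≤ τ z := by
    intro z hz N
    have hb := bessel hu hv u0 lu lv lxu δ hδ_pos hδ_mono hδ_zero N z (fun k => (hzp z hz k).ne')
    have hv2 : 0 < v z ^ 2 := by have := hvne z hz; positivity
    rw [← Finset.mul_sum, Fin.sum_univ_eq_sum_range (fun k => 1 / (δ k * (z + δ k) ^ 2)) N] at hb
    have e : τ z = (2 * v z ^ 2 - 4 * z * u z ^ 2) / v z ^ 2 := by
      have hvz := hvne z hz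
      simp only [hτ]; field_simp
    rw [e, le_div_iff₀ hv2]
    linarith
  have hA : ∀ z, -δ 0 < z → ∀ N,
      (z + δ N) * (τ z - ∑ k ∈ Finset.range N, 1 / (δ k * (z + δ k) ^ 2)) ≤
        m z - ∑ k ∈ Finset.range N, 1 / (δ k * (z + δ k)) := by
    intro z hz N
    have hb := star hu hv u0 v0 up ua lu lv lxu δ hδ_pos hδ_mono hδ_zero hδ_all N z (hzp z hz)
    have hvz := hvne z hz
    have hv2 : 0 < v z ^ 2 := by positivity
    rw [Fin.sum_univ_eq_sum_range (fun k => (δ N - δ k) * v z ^ 2 / 2 *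
      (1 / (δ k * (z + δ k) ^ 2))) N] at hb
    have e1 : ∑ k ∈ Finset.range N, (δ N - δ k) * v z ^ 2 / 2 * (1 / (δ k * (z + δ k) ^ 2)) =
      v z ^ 2 / 2 * ((z + δ N) * (∑ k ∈ Finset.range N, 1 / (δ k * (z + δ k) ^ 2)) -
        ∑ k ∈ Finset.range N, 1 / (δ k * (z + δ k))) := by
      rw [Finset.mul_sum, ← Finset.sum_sub_distrib, Finset.mul_sum]
      refine Finset.sum_congr rfl fun k _ => ?_
      have := hzp z hz k
      have := hδ_pos k
      field_simp
      ring
    have e2 : u z * v z - 2 * (z + δ N) * (z * u z ^ 2 - v z ^ 2 / 2) =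
      v z ^ 2 / 2 * ((z + δ N) * τ z - m z) := by
      simp only [hτ, hm]; field_simp; ring
    rw [e1, e2] at hb
    have := le_of_mul_le_mul_left hb (by positivity)
    linarith
  have hAle : ∀ z, -δ 0 < z → ∀ N, ∑ k ∈ Finset.range N, 1 / (δ k * (z + δ k)) ≤ m z := by
    intro z hz N
    have h1 := hA z hz N
    have h2 := mul_nonneg (hzp z hz N).le (sub_nonneg.mpr (hT z hz N))
    linarith
  have hAsum : ∀ z, -δ 0 < z → Summable (fun k => 1 / (δ k * (z + δ k))) := fun z hz =>
    summable_of_sum_range_le (fun k => by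
      have := hzp z hz k; have := hδ_pos k; positivity) (hAle z hz)
  have h00 : -δ 0 < 0 := by linarith [hδ_pos 0]
  have hδtop : Tendsto δ atTop atTop := by
    have h1 := (hAsum 0 h00).tendsto_atTop_zero
    have h2 : Tendsto (fun k => (δ k * (0 + δ k))) atTop atTop := by
      have : Tendsto (fun k => 1 / (δ k * (0 + δ k))) atTop (𝓝[>] 0) :=
        tendsto_nhdsWithin_iff.mpr ⟨h1, Eventually.of_forall fun k => by
          have := hδ_pos k; simp only [mem_Ioi]; positivity⟩
      refine this.inv_tendsto_nhdsGT_zero.congr fun k => ?_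
      simp only [Pi.inv_apply, one_div, inv_inv]
    rw [tendsto_atTop_atTop]
    intro b
    obtain ⟨i, hi⟩ := tendsto_atTop_atTop.mp h2 (b ^ 2)
    refine ⟨i, fun k hk => ?_⟩
    have := hi k hk
    have h3 := hδ_pos k
    by_contra hcon
    nlinarith
  have hTsum : ∀ z, -δ 0 < z → HasSum (fun k => 1 / (δ k * (z + δ k) ^ 2)) (τ z) := by
    intro z hz
    rw [hasSum_iff_tendsto_nat_of_nonneg (fun k => by
      have := hzp z hz k; have := hδ_pos k; positivity)]
    have hl : Tendsto (fun N => τ z - m z / (z + δ N)) atTop (𝓝 (τ z)) := by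
      have : Tendsto (fun N => m z / (z + δ N)) atTop (𝓝 0) :=
        tendsto_const_nhds.div_atTop (tendsto_atTop_add_const_left _ z hδtop)
      simpa using tendsto_const_nhds.sub this
    refine tendsto_of_tendsto_of_tendsto_of_le_of_le hl tendsto_const_nhds ?_ (hT z hz)
    intro N
    have h1 := hA z hz N
    have h2 : 0 ≤ ∑ k ∈ Finset.range N, 1 / (δ k * (z + δ k)) := Finset.sum_nonneg fun k _ => by
      have := hzp z hz k; have := hδ_pos k; positivity
    have h3 := hzp z hz N
    have h4 : τ z - ∑ k ∈ Finset.range N, 1 / (δ k * (z + δ k) ^ 2) ≤ m z / (z + δ N) := by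
      rw [le_div_iff₀ h3]; linarith
    simp only
    linarith
  have hS3 : HasSum (fun k => ((δ k) ^ 3)⁻¹) 2 := by
    convert hTsum 0 h00 using 1
    · ext k; rw [zero_add, one_div]; congr 1; ring
    · simp [hτ]
  have hS4s : Summable (fun k => ((δ k) ^ 4)⁻¹) := by
    refine Summable.of_nonneg_of_le (fun k => by have := hδ_pos k; positivity) (fun k => ?_)
      (hS3.summable.mul_left (δ 0)⁻¹)
    have h1 := hδ_pos k
    have h0 := hδ_pos 0
    have h2 := hδ_mono.monotone (Nat.zero_le k)
    rw [← mul_inv]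
    apply inv_anti₀ (by positivity)
    calc δ 0 * δ k ^ 3 ≤ δ k * δ k ^ 3 := by gcongr
      _ = _ := by ring
  set t : Set ℝ := Ioi (-(δ 0 / 2)) with ht
  have htz : ∀ z ∈ t, -δ 0 < z := fun z hz => by
    have : -(δ 0 / 2) < z := hz
    linarith [hδ_pos 0]
  have hhalf : ∀ z ∈ t, ∀ k, δ k / 2 ≤ z + δ k := fun z hz k => by
    have h1 : -(δ 0 / 2) < z := hz
    have h2 := hδ_mono.monotone (Nat.zero_le k)
    linarith
  have h0t : (0:ℝ) ∈ t := by
    have := hδ_pos 0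
    simp only [ht, mem_Ioi]; linarith
  have hAd : ∀ z ∈ t, HasDerivAt (fun z => ∑' k, 1 / (δ k * (z + δ k))) (-τ z) z := by
    intro z hz
    have h := hasDerivAt_tsum_of_isPreconnected (t := t)
      (g := fun k z => 1 / (δ k * (z + δ k))) (g' := fun k z => -(1 / (δ k * (z + δ k) ^ 2)))
      (hS3.summable.mul_left 4) isOpen_Ioi isPreconnected_Ioi ?_ ?_ h0t (hAsum 0 h00) hz
    · rwa [tsum_neg, (hTsum z (htz z hz)).tsum_eq] at h
    · intro k y hy
      have h1 := hzp y (htz y hy) k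
      have h2 := hδ_pos k
      have h3 : HasDerivAt (fun z => δ k * (z + δ k)) (δ k * 1) y :=
        ((hasDerivAt_id y).add_const _).const_mul _
      have h4 := (hasDerivAt_const y (1:ℝ)).div h3 (by positivity)
      refine h4.congr_deriv ?_
      field_simp
      ring
    · intro k y hy
      have h1 := hhalf y hy k
      have h2 := hδ_pos k
      have h3 := hzp y (htz y hy) k
      rw [norm_neg, norm_of_nonneg (by positivity), ← div_eq_mul_inv,
        div_le_div_iff₀ (by positivity) (by positivity)]
      calc 1 * δ k ^ 3 = 4 * (δ k * (δ k / 2) ^ 2) := by ring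
        _ ≤ _ := by gcongr
  have hTd : HasDerivAt (fun z => ∑' k, 1 / (δ k * (z + δ k) ^ 2))
      (∑' k, -(2 / (δ k * (0 + δ k) ^ 3))) 0 := by
    refine hasDerivAt_tsum_of_isPreconnected (t := t)
      (g := fun k z => 1 / (δ k * (z + δ k) ^ 2)) (g' := fun k z => -(2 / (δ k * (z + δ k) ^ 3)))
      (hS4s.mul_left 16) isOpen_Ioi isPreconnected_Ioi ?_ ?_ h0t (hTsum 0 h00).summable h0t
    · intro k y hy
      have h1 := hzp y (htz y hy) k
      have h2 := hδ_pos k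
      have h3 : HasDerivAt (fun z => δ k * (z + δ k) ^ 2)
          (δ k * ((2:ℕ) * (y + δ k) ^ (2 - 1) * 1)) y :=
        (((hasDerivAt_id y).add_const _).pow 2).const_mul _
      have h4 := (hasDerivAt_const y (1:ℝ)).div h3 (by positivity)
      refine h4.congr_deriv ?_
      field_simp
      norm_num
      ring
    · intro k y hy
      have h1 := hhalf y hy k
      have h2 := hδ_pos k
      have h3 := hzp y (htz y hy) k
      rw [norm_neg, norm_of_nonneg (by positivity), ← div_eq_mul_inv,
        div_le_div_iff₀ (by positivity) (by positivity)]
      calc 2 * δ k ^ 4 = 16 * (δ k * (δ k / 2) ^ 3) := by ring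
        _ ≤ _ := by gcongr
  have hτd : HasDerivAt τ (-(4 / v 0 ^ 2)) 0 := by
    have h1 : DifferentiableAt ℝ (fun z => 4 * u z ^ 2 / v z ^ 2) 0 := by
      have a := (hu 0).differentiableAt
      have b := (hv 0).differentiableAt
      exact ((a.pow 2).const_mul 4).div (b.pow 2) (by have := v0.ne; positivity)
    have h2 := ((hasDerivAt_id (0:ℝ)).mul h1.hasDerivAt).const_sub 2
    refine h2.congr_deriv ?_
    simp [u0]
  have hS4v : ∑' k, ((δ k) ^ 4)⁻¹ = 2 / v 0 ^ 2 := by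
    have heq : (fun z => ∑' k, 1 / (δ k * (z + δ k) ^ 2)) =ᶠ[𝓝 0] τ := by
      filter_upwards [isOpen_Ioi.mem_nhds h0t] with z hz
      exact (hTsum z (htz z hz)).tsum_eq
    have h := hTd.unique (hτd.congr_of_eventuallyEq heq)
    have e : (fun k => -(2 / (δ k * (0 + δ k) ^ 3))) = fun k => (-2) * ((δ k) ^ 4)⁻¹ := by
      ext k
      have := hδ_pos k
      field_simp
      ring
    rw [e, tsum_mul_left] at h
    have : (4:ℝ) / v 0 ^ 2 = 2 * (2 / v 0 ^ 2) := by ring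
    linarith
  have hmd : ∀ z ∈ t, HasDerivAt m (-τ z) z := by
    intro z hz
    have hne := hvne z (htz z hz)
    refine (((hu z).const_mul (-2)).div (hv z) hne).congr_deriv ?_
    simp only [hτ]
    field_simp
    ring
  have hconst : ∀ z ∈ t, m z - ∑' k, 1 / (δ k * (z + δ k)) = m 0 - ∑' k, 1 / (δ k * (0 + δ k)) := by
    intro z hz
    have hd : ∀ y ∈ t, HasDerivAt (fun z => m z - ∑' k, 1 / (δ k * (z + δ k))) 0 y := fun y hy =>
      ((hmd y hy).sub (hAd y hy)).congr_deriv (by ring)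
    exact isOpen_Ioi.is_const_of_deriv_eq_zero isPreconnected_Ioi
      (fun y hy => (hd y hy).differentiableAt.differentiableWithinAt)
      (fun y hy => (hd y hy).deriv) hz h0t
  have hD0 : m 0 - ∑' k, 1 / (δ k * (0 + δ k)) = 0 := by
    apply le_antisymm
    · have hb : ∀ ε : ℝ, 0 < ε → m 0 - ∑' k, 1 / (δ k * (0 + δ k)) ≤ ε := by
        intro ε hε
        have hzpos : (0:ℝ) < 2 / ε ^ 2 := by positivity
        set z : ℝ := 2 / ε ^ 2 with hz
        have hzt : z ∈ t := lt_trans h0t hzpos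
        rw [← hconst z hzt]
        have h1 : 0 ≤ ∑' k, 1 / (δ k * (z + δ k)) := tsum_nonneg fun k => by
          have := hzp z (htz z hzt) k; have := hδ_pos k; positivity
        have h2 := hE z hzpos.le
        have h3 : m z ≤ ε := by
          apply (abs_le_of_sq_le_sq' · hε.le |>.2)
          have hne := hvne z (htz z hzt)
          have hv2 : 0 < v z ^ 2 := by positivity
          have : m z ^ 2 = 4 * u z ^ 2 / v z ^ 2 := by simp only [hm]; field_simp; ring
          rw [this, div_le_iff₀ hv2]
          have h5 : ε ^ 2 * z = 2 := by rw [hz]; field_simp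
          calc 4 * u z ^ 2 = ε ^ 2 * (2 * z * u z ^ 2) := by linear_combination (-2 * u z ^ 2) * h5
            _ ≤ _ := by gcongr
        linarith
      exact le_of_forall_pos_le_add (by simpa using hb)
    · exact sub_nonneg.mpr (Real.tsum_le_of_sum_range_le (fun k => by
        have := hδ_pos k; simp only [zero_add]; positivity) (hAle 0 h00))
  refine ⟨?_, hS3, hS4v ▸ hS4s.hasSum⟩
  have h := (hAsum 0 h00).hasSum
  have e : ∑' k, 1 / (δ k * (0 + δ k)) = -2 / v 0 := by
    rw [← sub_eq_zero.mp hD0]; simp [hm, u0]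
  rw [e] at h
  convert h using 1
  ext k
  rw [zero_add, one_div]; congr 1; ring

end AiryTrace

/-- trace formulas for the zeros `δ k` (here `δ k` stands for `δ'_{k+1}`)
of the derivative of the normalized Airy function:
`∑ δₖ⁻² = -2/u'(0)`, `∑ δₖ⁻³ = 2`, `∑ δₖ⁻⁴ = 2/u'(0)²`, and the weights
`pₖ = (u'(0)²/2)·δₖ⁻⁴` sum to `1`. -/
theorem stmt11
    (u : ℝ → ℝ) (hu_smooth : ContDiff ℝ 2 u)
    (hu_ode : ∀ h : ℝ, deriv (deriv u) h = 2 * h * u h)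
    (hu_zero : u 0 = 1)
    (hu'_zero : deriv u 0 = -((6:ℝ) ^ ((1:ℝ)/3) * Real.Gamma (2/3) / Real.Gamma (1/3)))
    (hu_pos : ∀ h : ℝ, 0 ≤ h → 0 < u h)
    (hu_anti : StrictAntiOn u (Ici 0))
    (hu_lim : Tendsto u atTop (𝓝 0))
    (δ : ℕ → ℝ) (hδ_pos : ∀ k, 0 < δ k) (hδ_mono : StrictMono δ)
    (hδ_zero : ∀ k, deriv u (-(δ k)) = 0)
    (hδ_all : ∀ x : ℝ, 0 < x → deriv u (-x) = 0 → ∃ k, δ k = x) :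
    (∑' k : ℕ, ((δ k) ^ 2)⁻¹) = -2 / deriv u 0 ∧
    (∑' k : ℕ, ((δ k) ^ 3)⁻¹) = 2 ∧
    (∑' k : ℕ, ((δ k) ^ 4)⁻¹) = 2 / (deriv u 0) ^ 2 ∧
    (∑' k : ℕ, (deriv u 0) ^ 2 / 2 * ((δ k) ^ 4)⁻¹) = 1 := by
  have d1 : Differentiable ℝ u := hu_smooth.differentiable (by norm_num)
  have c1 : ContDiff ℝ 1 (deriv u) := by
    have : ContDiff ℝ (1 + 1) u := by simpa [one_add_one_eq_two] using hu_smooth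
    exact (contDiff_succ_iff_deriv.mp this).2.2
  have d2 : Differentiable ℝ (deriv u) := c1.differentiable (by norm_num)
  have hv0 : deriv u 0 < 0 := by
    rw [hu'_zero]
    have h1 : 0 < Real.Gamma (2 / 3) := Real.Gamma_pos_of_pos (by norm_num)
    have h2 : 0 < Real.Gamma (1 / 3) := Real.Gamma_pos_of_pos (by norm_num)
    have : 0 < (6:ℝ) ^ ((1:ℝ) / 3) * Real.Gamma (2 / 3) / Real.Gamma (1 / 3) := by positivity
    linarith
  obtain ⟨h2, h3, h4⟩ := AiryTrace.main (u := u) (v := deriv u) (fun x => (d1 x).hasDerivAt)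
    (fun x => by rw [← hu_ode x]; exact (d2 x).hasDerivAt) hu_zero hv0 hu_pos hu_anti.antitoneOn
    hu_lim δ hδ_pos hδ_mono hδ_zero hδ_all
  refine ⟨h2.tsum_eq, h3.tsum_eq, h4.tsum_eq, ?_⟩
  rw [tsum_mul_left, h4.tsum_eq]
  have := hv0.ne
  field_simp
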